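/- Let Σ be a symmetric real matrix indexed by a countable set I, and let X = (X_i) be a mean-zero Gaussian family with covariance Σ. Define Wick products He_α(X; Σ) = Σ_{M ∈ M(α)} (-1)^{|M|} ∏_{uv ∈ M} Σ[u,v] ∏_{u ∉ M} X_u, summing over partial matchings M of the multiset α. Then for finitely supported multi-indices α, β with |α| ≠ |β| (different total degrees), E[He_α(X; Σ) · He_β(X; Σ)] = 0; and in general E[He_α(X;Σ) He_β(X;Σ)] = Σ_{M ∈ M_perf(α,β)} ∏_{uv ∈ M} Σ[u,v], where M_perf(α,β) ranges over perfect matchings pairing elements of α only with elements of β. -/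

import Mathlib

open MeasureTheory ProbabilityTheory

/-- The Wick product `He_a(X; S)` associated with the finite multiset of indices
listed by `a : Fin m → I`:
`He_a = Σ_{M partial matchings of the multiset} (-1)^{|M|} ∏_{uv ∈ M} S[u,v] ∏_{u ∉ M} X_u`.
Partial matchings of `Fin m` are encoded as involutions `f : Fin m → Fin m`,
the matched pairs being the 2-cycles of `f` and the unmatched elements its fixed
points. -/
noncomputable def wickProduct {Ω I : Type*} (X : I → Ω → ℝ) (S : I → I → ℝ)
    {m : ℕ} (a : Fin m → I) (ω : Ω) : ℝ :=
  ∑ f ∈ Finset.univ.filter (fun f : Fin m → Fin m => ∀ x, f (f x) = x),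
    (-1 : ℝ) ^ ((Finset.univ.filter (fun x : Fin m => f x ≠ x)).card / 2) *
      (∏ x ∈ Finset.univ.filter (fun x : Fin m => x < f x), S (a x) (a (f x))) *
      ∏ x ∈ Finset.univ.filter (fun x : Fin m => f x = x), X (a x) ω

theorem integral_pow_mul_exp_gaussianReal (v : NNReal) (n : ℕ) (t : ℝ) :
    ∫ x, x ^ (n + 1) * Real.exp (t * x) ∂gaussianReal 0 v =
      v * t * ∫ x, x ^ n * Real.exp (t * x) ∂gaussianReal 0 v +
        n * v * ∫ x, x ^ (n - 1) * Real.exp (t * x) ∂gaussianReal 0 v := by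
  have hderiv (n : ℕ) (t : ℝ) :
      HasDerivAt (fun t => ∫ x, x ^ n * Real.exp (t * x) ∂gaussianReal 0 v)
        (∫ x, x ^ (n + 1) * Real.exp (t * x) ∂gaussianReal 0 v) t :=
    hasDerivAt_integral_pow_mul_exp_real (X := id) (by simp) n
  induction n generalizing t with
  | zero =>
    have hmgf : (fun t => ∫ x, x ^ 0 * Real.exp (t * x) ∂gaussianReal 0 v) =
        fun t => Real.exp (v * t ^ 2 / 2) := by
      simpa [funext_iff, mgf] using mgf_id_gaussianReal (μ := 0) (v := v)
    have h := hderiv 0 t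
    rw [hmgf] at h
    have h' : HasDerivAt (fun t : ℝ => Real.exp (v * t ^ 2 / 2))
        (Real.exp (v * t ^ 2 / 2) * (v * t)) t := by
      convert! ((((hasDerivAt_id t).pow 2).const_mul (v : ℝ)).div_const 2).exp using 1
      simp; ring
    rw [h.unique h', ← congrFun hmgf t]
    simp [mul_comm]
  | succ n ih =>
    have h := hderiv (n + 1) t
    rw [funext ih] at h
    have h1 := (((hasDerivAt_id t).const_mul (v : ℝ)).mul (hderiv n t)).add
      ((hderiv (n - 1) t).const_mul (n * v : ℝ))
    have h2 := h.unique h1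
    rw [h2]
    rcases n with _ | n
    · simp; ring
    · simp; ring

theorem integral_pow_add_two_gaussianReal (v : NNReal) (n : ℕ) :
    ∫ x, x ^ (n + 2) ∂gaussianReal 0 v = (n + 1) * v * ∫ x, x ^ n ∂gaussianReal 0 v := by
  simpa using integral_pow_mul_exp_gaussianReal v (n + 1) 0

section Algebra

variable {A : Type*} [CommRing A] [Algebra ℝ A]

theorem hasDerivAt_linearMap_mul_add_smul_pow (E : A →ₗ[ℝ] ℝ) (P L W : A) (n : ℕ) (t : ℝ) :
    HasDerivAt (fun t : ℝ => E (P * (L + t • W) ^ n))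
      (n * E (P * W * (L + t • W) ^ (n - 1))) t := by
  induction n generalizing P with
  | zero => simpa using hasDerivAt_const t (E P)
  | succ n ih =>
    have h : (fun t : ℝ => E (P * (L + t • W) ^ (n + 1))) =
        fun t : ℝ => E (P * L * (L + t • W) ^ n) + t * E (P * W * (L + t • W) ^ n) := by
      ext t
      rw [← smul_eq_mul t, ← map_smul, ← map_add]
      congr 1
      simp only [Algebra.smul_def]
      ring
    rw [h]
    have h1 := (ih (P * L)).add ((hasDerivAt_id t).mul (ih (P * W)))
    convert! h1 using 1
    rcases n with _ | n
    · simp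
    · simp only [id, one_mul, Nat.add_sub_cancel]
      have e : P * W * (L + t • W) ^ (n + 1) =
        P * L * W * (L + t • W) ^ n + t • (P * W * W * (L + t • W) ^ n) := by
        simp only [Algebra.smul_def]
        ring
      have e2 : E (P * W * (L + t • W) ^ (n + 1)) =
        E (P * L * W * (L + t • W) ^ n) + t * E (P * W * W * (L + t • W) ^ n) := by
        rw [e, map_add, map_smul, smul_eq_mul]
      rw [e2]
      push_cast
      ring

theorem hasDerivAt_linearMap_mul_add_smul_pow_zero (E : A →ₗ[ℝ] ℝ) (P L W : A) (n : ℕ) :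
    HasDerivAt (fun t : ℝ => E (P * (L + t • W) ^ n)) (n * E (P * W * L ^ (n - 1))) 0 := by
  simpa using hasDerivAt_linearMap_mul_add_smul_pow E P L W n 0

theorem linearMap_mul_pow_of_gaussian_moments (E : A →ₗ[ℝ] ℝ) (V : Submodule ℝ A)
    (hV1 : ∀ L ∈ V, E L = 0)
    (hV : ∀ L ∈ V, ∀ n : ℕ, E (L ^ (n + 2)) = (n + 1) * E (L ^ 2) * E (L ^ n))
    {L W : A} (hL : L ∈ V) (hW : W ∈ V) (n : ℕ) :
    E (W * L ^ n) = n * E (W * L) * E (L ^ (n - 1)) := by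
  induction n using Nat.strong_induction_on with
  | _ n ih =>
  rcases n with _ | n
  · simp [hV1 W hW]
  have hd (k : ℕ) := hasDerivAt_linearMap_mul_add_smul_pow_zero E 1 L W k
  simp only [one_mul] at hd
  have h := hd (n + 2)
  rw [funext fun t : ℝ => hV (L + t • W) (V.add_mem hL (V.smul_mem t hW)) n] at h
  have h2 := h.unique (((hd 2).const_mul ((n : ℝ) + 1)).mul (hd n))
  simp only [zero_smul, add_zero, Nat.cast_add, Nat.cast_ofNat,
    pow_one, Nat.reduceSub, show n + 2 - 1 = n + 1 from rfl] at h2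
  rcases n with _ | n
  · simp at h2 ⊢
    linarith
  · rw [Nat.add_sub_cancel] at h2 ⊢
    rw [ih n (by omega)] at h2
    rcases n with _ | n
    · norm_num [hV1 L hL] at h2 ⊢
      exact h2
    · have h3 := hV L hL n
      simp only [Nat.add_sub_cancel] at h2
      have hn : (n : ℝ) + 4 ≠ 0 := by positivity
      apply mul_left_cancel₀ hn
      push_cast at h2 h3 ⊢
      rw [show n + 1 + 1 = n + 2 from rfl] at *
      linear_combination h2 - (n + 2) * (n + 3) * E (W * L) * h3

theorem linearMap_mul_mul_pow_eq_zero (F : A →ₗ[ℝ] ℝ) (V : Submodule ℝ A) {P Y : A} (hY : Y ∈ V)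
    (hP : ∀ L ∈ V, ∀ n : ℕ, F (P * L ^ n) = 0) {L : A} (hL : L ∈ V) (n : ℕ) :
    F (P * Y * L ^ n) = 0 := by
  have h := hasDerivAt_linearMap_mul_add_smul_pow_zero F P L Y (n + 1)
  rw [funext fun t : ℝ => hP (L + t • Y) (V.add_mem hL (V.smul_mem t hY)) (n + 1)] at h
  have h1 := h.unique (hasDerivAt_const 0 0)
  have hn : ((n + 1 : ℕ) : ℝ) ≠ 0 := by positivity
  exact (mul_eq_zero.1 (by simpa only [Nat.add_sub_cancel] using h1)).resolve_left hn

end Algebra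

theorem linearMap_X_mul_eq_derivation {I : Type*} (E : MvPolynomial I ℝ →ₗ[ℝ] ℝ)
    (hV1 : ∀ L ∈ Submodule.span ℝ (Set.range (MvPolynomial.X (R := ℝ) (σ := I))), E L = 0)
    (hV : ∀ L ∈ Submodule.span ℝ (Set.range (MvPolynomial.X (R := ℝ) (σ := I))), ∀ n : ℕ,
      E (L ^ (n + 2)) = (n + 1) * E (L ^ 2) * E (L ^ n))
    (i : I) (P : MvPolynomial I ℝ) :
    E (MvPolynomial.X i * P) = E (MvPolynomial.mkDerivation ℝ
      (fun j => MvPolynomial.C (E (MvPolynomial.X i * MvPolynomial.X j))) P) := by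
  set V := Submodule.span ℝ (Set.range (MvPolynomial.X (R := ℝ) (σ := I))) with hVdef
  set D := MvPolynomial.mkDerivation ℝ
    (fun j => MvPolynomial.C (σ := I) (E (MvPolynomial.X i * MvPolynomial.X j))) with hD
  have hmem (j : I) : MvPolynomial.X j ∈ V := Submodule.subset_span ⟨j, rfl⟩
  have hDV (L) (hL : L ∈ V) : D L = MvPolynomial.C (E (MvPolynomial.X i * L)) := by
    induction hL using Submodule.span_induction with
    | mem x hx => obtain ⟨j, rfl⟩ := hx; simp [hD]
    | zero => simp
    | add x y _ _ hx hy => simp [hx, hy, mul_add]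
    | smul c x _ hx =>
      rw [Derivation.map_smul, hx, mul_smul_comm, map_smul, smul_eq_mul,
        MvPolynomial.C_mul, MvPolynomial.smul_eq_C_mul]
  set F : MvPolynomial I ℝ →ₗ[ℝ] ℝ :=
    E ∘ₗ LinearMap.mulLeft ℝ (MvPolynomial.X i) - E ∘ₗ (D : MvPolynomial I ℝ →ₗ[ℝ] _) with hF
  suffices h : ∀ L ∈ V, ∀ n : ℕ, F (P * L ^ n) = 0 by
    have := h 0 V.zero_mem 0
    simpa [hF, sub_eq_zero] using this
  induction P using MvPolynomial.induction_on with
  | C c =>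
    intro L hL n
    have h := linearMap_mul_pow_of_gaussian_moments E V hV1 hV hL (hmem i) n
    rw [← MvPolynomial.smul_eq_C_mul, map_smul]
    have h2 : E (D (L ^ n)) = n * E (MvPolynomial.X i * L) * E (L ^ (n - 1)) := by
      rw [Derivation.leibniz_pow, hDV L hL, smul_eq_mul, mul_comm (L ^ (n - 1)),
        ← MvPolynomial.smul_eq_C_mul, map_nsmul, map_smul, nsmul_eq_mul, smul_eq_mul, mul_assoc]
    rw [hF, LinearMap.sub_apply, LinearMap.comp_apply, LinearMap.comp_apply,
      LinearMap.mulLeft_apply, Derivation.coeFn_coe, h, h2, sub_self, smul_zero]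
  | add p q hp hq =>
    intro L hL n
    rw [add_mul, map_add, hp L hL, hq L hL, add_zero]
  | mul_X p j hp =>
    intro L hL n
    exact linearMap_mul_mul_pow_eq_zero F V (hmem j) hp hL n


/-- The involutions of `α` fixing every point outside `T`. -/
def involutionsOn {α : Type*} [Fintype α] [DecidableEq α] (T : Finset α) : Finset (α → α) :=
  Finset.univ.filter fun f => (∀ x, f (f x) = x) ∧ ∀ x, x ∉ T → f x = x

theorem mkDerivation_prod_X {α I : Type*} [DecidableEq α] (d : I → ℝ) (a : α → I) (T : Finset α) :
    MvPolynomial.mkDerivation ℝ (fun j => MvPolynomial.C (σ := I) (d j))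
        (∏ x ∈ T, MvPolynomial.X (a x)) =
      ∑ y ∈ T, MvPolynomial.C (d (a y)) * ∏ x ∈ T.erase y, MvPolynomial.X (a x) := by
  induction T using Finset.induction_on with
  | empty => simp
  | insert i T hi ih =>
    rw [Finset.prod_insert hi, Derivation.leibniz, ih, MvPolynomial.mkDerivation_X,
      Finset.sum_insert hi, Finset.erase_insert hi, smul_eq_mul, smul_eq_mul, Finset.mul_sum,
      add_comm, mul_comm]
    congr 1
    refine Finset.sum_congr rfl fun y hy => ?_
    have hiy : i ≠ y := fun h => hi (h ▸ hy)
    rw [Finset.erase_insert_of_ne hiy, Finset.prod_insert (by simp [hi])]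
    ring

theorem image_univ_eq_insert_tail {γ : Type*} [DecidableEq γ] {k : ℕ} (f : Fin (k + 1) → γ) :
    Finset.univ.image f = insert (f 0) (Finset.univ.image (Fin.tail f)) := by
  ext z
  simp [Fin.exists_fin_succ, Fin.tail, eq_comm]

section Wick
variable {α I : Type*} [Fintype α] [LinearOrder α]

theorem mem_involutionsOn {T : Finset α} {f : α → α} :
    f ∈ involutionsOn T ↔ (∀ x, f (f x) = x) ∧ ∀ x, x ∉ T → f x = x := by
  simp [involutionsOn]

theorem filter_involutionsOn_apply_eq_self (T : Finset α) (y : α) :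
    (involutionsOn T).filter (fun f => f y = y) = involutionsOn (T.erase y) := by
  ext f
  simp only [Finset.mem_filter, mem_involutionsOn, Finset.mem_erase, not_and]
  grind

/-- The signed product of covariances over the matched pairs of an involution. -/
noncomputable def matchingWeight (S : I → I → ℝ) (a : α → I) (f : α → α) : ℝ :=
  (-1 : ℝ) ^ ((Finset.univ.filter (fun x => f x ≠ x)).card / 2) *
    ∏ x ∈ Finset.univ.filter (fun x => x < f x), S (a x) (a (f x))

/-- The Wick product of the variables listed by `a` on `T`, as a polynomial. -/
noncomputable def wickPolynomial (S : I → I → ℝ) (a : α → I) (T : Finset α) : MvPolynomial I ℝ :=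
  ∑ f ∈ involutionsOn T, MvPolynomial.C (matchingWeight S a f) *
    ∏ x ∈ T.filter (fun x => f x = x), MvPolynomial.X (a x)

/-- Modify `f` so that it exchanges `i` and `x`. -/
def matchPair (i x : α) (f : α → α) : α → α :=
  fun z => if z = i then x else if z = x then i else f z

theorem matchingWeight_matchPair (S : I → I → ℝ) (hS : ∀ i j, S i j = S j i) (a : α → I)
    {i x : α} (hix : i ≠ x) {f : α → α} (hi : f i = i) (hx : f x = x) :
    matchingWeight S a (matchPair i x f) = -(S (a i) (a x) * matchingWeight S a f) := by
  have hsupp : Finset.univ.filter (fun z => matchPair i x f z ≠ z) =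
      insert i (insert x (Finset.univ.filter fun z => f z ≠ z)) := by
    ext z
    simp only [matchPair, Finset.mem_filter, Finset.mem_univ, true_and, Finset.mem_insert]
    grind
  have hcard : (Finset.univ.filter (fun z => matchPair i x f z ≠ z)).card =
      (Finset.univ.filter fun z => f z ≠ z).card + 2 := by
    rw [hsupp, Finset.card_insert_of_notMem (by simp [hix, hi]),
      Finset.card_insert_of_notMem (by simp [hx])]
  have hsplit (g : α → ℝ) : ∏ z, g z = g i * g x * ∏ z ∈ (Finset.univ.erase i).erase x, g z := by
    rw [← Finset.mul_prod_erase Finset.univ g (Finset.mem_univ i),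
      ← Finset.mul_prod_erase (Finset.univ.erase i) g
        (Finset.mem_erase.2 ⟨hix.symm, Finset.mem_univ x⟩), mul_assoc]
  have hprod : ∏ z ∈ Finset.univ.filter (fun z => z < matchPair i x f z),
      S (a z) (a (matchPair i x f z)) = S (a i) (a x) *
        ∏ z ∈ Finset.univ.filter (fun z => z < f z), S (a z) (a (f z)) := by
    rw [Finset.prod_filter, Finset.prod_filter, hsplit,
      hsplit fun z => if z < f z then S (a z) (a (f z)) else 1]
    have hrest : ∏ z ∈ (Finset.univ.erase i).erase x,
        (if z < matchPair i x f z then S (a z) (a (matchPair i x f z)) else 1) =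
        ∏ z ∈ (Finset.univ.erase i).erase x, (if z < f z then S (a z) (a (f z)) else 1) := by
      refine Finset.prod_congr rfl fun z hz => ?_
      simp only [Finset.mem_erase, Finset.mem_univ, and_true] at hz
      simp [matchPair, hz.1, hz.2]
    rw [hrest]
    rcases lt_or_gt_of_ne hix with h | h
    · simp [matchPair, hi, hx, hix.symm, h, h.not_gt]
    · simp [matchPair, hi, hx, hix.symm, h, h.not_gt, hS (a x)]
  rw [matchingWeight, matchingWeight, hcard, hprod, Nat.add_div_right _ two_pos, pow_succ]
  ring

theorem sum_involutionsOn_insert {M : Type*} [AddCommMonoid M] {T : Finset α} {i : α} (hi : i ∉ T)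
    (g : (α → α) → M) :
    ∑ f ∈ involutionsOn (insert i T), g f =
      ∑ f ∈ involutionsOn T, g f +
        ∑ x ∈ T, ∑ f ∈ involutionsOn (T.erase x), g (matchPair i x f) := by
  have hmaps : ∀ f ∈ involutionsOn (insert i T), f i ∈ insert i T := by
    intro f hf
    rw [mem_involutionsOn] at hf
    by_contra h
    exact h (by rw [← hf.2 _ h, hf.1]; simp)
  rw [← Finset.sum_fiberwise_of_maps_to hmaps, Finset.sum_insert hi,
    filter_involutionsOn_apply_eq_self, Finset.erase_insert hi]
  congr 1
  refine Finset.sum_congr rfl fun x hx => ?_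
  have hix : i ≠ x := fun h => hi (h ▸ hx)
  refine Finset.sum_bij' (fun f _ z => if z = i then i else if z = x then x else f z)
    (fun f _ => matchPair i x f) ?_ ?_ ?_ ?_ ?_
  · intro f hf
    simp only [Finset.mem_filter, mem_involutionsOn, Finset.mem_insert, Finset.mem_erase] at hf ⊢
    have := hf.1.1 i
    have h1 := hf.1.1
    constructor
    · intro z
      have := h1 z
      grind
    · intro z hz
      have := hf.1.2 z
      grind
  · intro f hf
    simp only [Finset.mem_filter, mem_involutionsOn, Finset.mem_insert, Finset.mem_erase,
      matchPair] at hf ⊢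
    have h1 := hf.1
    have h2 := hf.2 i
    have h3 := hf.2 x
    refine ⟨⟨fun z => ?_, fun z hz => ?_⟩, by simp⟩
    · have := h1 z
      grind
    · have := hf.2 z
      grind
  · intro f hf
    simp only [Finset.mem_filter, mem_involutionsOn] at hf
    have := hf.1.1 i
    funext z
    simp only [matchPair]
    grind
  · intro f hf
    simp only [mem_involutionsOn, Finset.mem_erase] at hf
    have h2 := hf.2 i
    have h3 := hf.2 x
    funext z
    simp only [matchPair]
    grind
  · intro f hf
    simp only [Finset.mem_filter, mem_involutionsOn] at hf
    have := hf.1.1 i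
    congr 1
    funext z
    simp only [matchPair]
    grind

theorem wickPolynomial_insert (S : I → I → ℝ) (hS : ∀ i j, S i j = S j i) (a : α → I)
    {T : Finset α} {i : α} (hi : i ∉ T) :
    wickPolynomial S a (insert i T) = MvPolynomial.X (a i) * wickPolynomial S a T -
      ∑ x ∈ T, MvPolynomial.C (S (a i) (a x)) * wickPolynomial S a (T.erase x) := by
  rw [wickPolynomial, sum_involutionsOn_insert hi, sub_eq_add_neg, ← Finset.sum_neg_distrib]
  congr 1
  · rw [wickPolynomial, Finset.mul_sum]
    refine Finset.sum_congr rfl fun f hf => ?_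
    rw [Finset.filter_insert, if_pos ((mem_involutionsOn.1 hf).2 i hi),
      Finset.prod_insert (by simp [hi])]
    ring
  · refine Finset.sum_congr rfl fun x hx => ?_
    rw [wickPolynomial, Finset.mul_sum, ← Finset.sum_neg_distrib]
    refine Finset.sum_congr rfl fun f hf => ?_
    have hix : i ≠ x := fun h => hi (h ▸ hx)
    have hf' := (mem_involutionsOn.1 hf).2
    rw [matchingWeight_matchPair S hS a hix (hf' i (by simp [hi])) (hf' x (by simp))]
    have hfilter : (insert i T).filter (fun z => matchPair i x f z = z) =
        (T.erase x).filter fun z => f z = z := by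
      ext z
      simp only [matchPair, Finset.mem_filter, Finset.mem_erase]
      grind
    rw [hfilter, map_neg, map_mul]
    ring

theorem wickPolynomial_empty (S : I → I → ℝ) (a : α → I) : wickPolynomial S a ∅ = 1 := by
  have h : involutionsOn (∅ : Finset α) = {id} := by
    ext f
    simp only [mem_involutionsOn, Finset.mem_singleton, funext_iff, id]
    grind
  simp [wickPolynomial, h, matchingWeight]

theorem mkDerivation_wickPolynomial (S : I → I → ℝ) (d : I → ℝ) (a : α → I) (T : Finset α) :
    MvPolynomial.mkDerivation ℝ (fun j => MvPolynomial.C (σ := I) (d j)) (wickPolynomial S a T) =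
      ∑ y ∈ T, MvPolynomial.C (d (a y)) * wickPolynomial S a (T.erase y) := by
  have hterm (c : ℝ) (F : Finset α) : MvPolynomial.mkDerivation ℝ
      (fun j => MvPolynomial.C (σ := I) (d j))
        (MvPolynomial.C c * ∏ x ∈ F, MvPolynomial.X (a x)) =
      ∑ y ∈ F, MvPolynomial.C c *
        (MvPolynomial.C (d (a y)) * ∏ x ∈ F.erase y, MvPolynomial.X (a x)) := by
    rw [← MvPolynomial.smul_eq_C_mul, Derivation.map_smul, mkDerivation_prod_X,
      MvPolynomial.smul_eq_C_mul, Finset.mul_sum]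
  simp only [wickPolynomial, map_sum, hterm, Finset.mul_sum]
  simp only [← filter_involutionsOn_apply_eq_self]
  rw [Finset.sum_comm' (t' := T) (s' := fun y => (involutionsOn T).filter fun f => f y = y)
    (by intro f y; simp only [Finset.mem_filter]; tauto)]
  refine Finset.sum_congr rfl fun y _ => Finset.sum_congr rfl fun f _ => ?_
  rw [Finset.filter_erase]
  ring

theorem linearMap_wickPolynomial_insert_mul {β : Type*} [Fintype β] [LinearOrder β]
    (S : I → I → ℝ) (hS : ∀ i j, S i j = S j i) (E : MvPolynomial I ℝ →ₗ[ℝ] ℝ)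
    (hE : ∀ i P, E (MvPolynomial.X i * P) =
      E (MvPolynomial.mkDerivation ℝ (fun j => MvPolynomial.C (S i j)) P))
    (a : α → I) (b : β → I) {T : Finset α} {i : α} (hi : i ∉ T) (U : Finset β) :
    E (wickPolynomial S a (insert i T) * wickPolynomial S b U) =
      ∑ y ∈ U, S (a i) (b y) * E (wickPolynomial S a T * wickPolynomial S b (U.erase y)) := by
  rw [wickPolynomial_insert S hS a hi, sub_mul, mul_assoc, map_sub, hE, Derivation.leibniz,
    mkDerivation_wickPolynomial, mkDerivation_wickPolynomial, smul_eq_mul, smul_eq_mul,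
    mul_comm (wickPolynomial S b U), map_add, add_sub_cancel_right, Finset.mul_sum, map_sum]
  refine Finset.sum_congr rfl fun y _ => ?_
  rw [mul_left_comm, ← MvPolynomial.smul_eq_C_mul, map_smul, smul_eq_mul]

theorem linearMap_wickPolynomial {β : Type*} [Fintype β] [LinearOrder β]
    (S : I → I → ℝ) (hS : ∀ i j, S i j = S j i) (E : MvPolynomial I ℝ →ₗ[ℝ] ℝ) (hE1 : E 1 = 1)
    (hE : ∀ i P, E (MvPolynomial.X i * P) =
      E (MvPolynomial.mkDerivation ℝ (fun j => MvPolynomial.C (S i j)) P))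
    (b : β → I) (U : Finset β) :
    E (wickPolynomial S b U) = if U = ∅ then 1 else 0 := by
  rcases U.eq_empty_or_nonempty with rfl | ⟨j, hj⟩
  · simp [wickPolynomial_empty, hE1]
  · have h := linearMap_wickPolynomial_insert_mul S hS E hE b b (Finset.notMem_erase j U) ∅
    rw [Finset.insert_erase hj] at h
    simpa [wickPolynomial_empty, Finset.ne_empty_of_mem hj] using h

theorem linearMap_wickPolynomial_image_mul {β : Type*} [Fintype β] [LinearOrder β]
    (S : I → I → ℝ) (hS : ∀ i j, S i j = S j i) (E : MvPolynomial I ℝ →ₗ[ℝ] ℝ) (hE1 : E 1 = 1)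
    (hE : ∀ i P, E (MvPolynomial.X i * P) =
      E (MvPolynomial.mkDerivation ℝ (fun j => MvPolynomial.C (S i j)) P))
    (a : α → I) (b : β → I) {k : ℕ} (c : Fin k → α) (hc : c.Injective) (U : Finset β) :
    E (wickPolynomial S a (Finset.univ.image c) * wickPolynomial S b U) =
      ∑ f : Fin k → β, if f.Injective ∧ Finset.univ.image f = U then
        ∏ x, S (a (c x)) (b (f x)) else 0 := by
  induction k generalizing U with
  | zero =>
    simp [wickPolynomial_empty, linearMap_wickPolynomial S hS E hE1 hE,
      Function.injective_of_subsingleton, eq_comm]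
  | succ k ih =>
    have hc0 : c 0 ∉ Finset.univ.image (Fin.tail c) := by
      simp [Fin.tail, hc.eq_iff]
    have htail : (Fin.tail c).Injective := hc.comp (Fin.succ_injective k)
    rw [image_univ_eq_insert_tail, linearMap_wickPolynomial_insert_mul S hS E hE a b hc0]
    simp only [ih (Fin.tail c) htail]
    rw [← (Fin.consEquiv fun _ => β).sum_comp, Fintype.sum_prod_type,
      ← Finset.sum_subset (Finset.subset_univ U)]
    · refine Finset.sum_congr rfl fun y hy => ?_
      rw [Finset.mul_sum]
      refine Finset.sum_congr rfl fun f _ => ?_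
      have hiff : (Function.Injective (Fin.consEquiv (fun _ => β) (y, f)) ∧
          Finset.univ.image (Fin.consEquiv (fun _ => β) (y, f)) = U) ↔
          (f.Injective ∧ Finset.univ.image f = U.erase y) := by
        change (Function.Injective (Fin.cons y f : Fin (k + 1) → β) ∧
          Finset.univ.image (Fin.cons y f : Fin (k + 1) → β) = U) ↔ _
        rw [Fin.cons_injective_iff, image_univ_eq_insert_tail, Fin.cons_zero, Fin.tail_cons]
        constructor
        · rintro ⟨⟨hyf, hf⟩, rfl⟩
          exact ⟨hf, (Finset.erase_insert (by simpa using hyf)).symm⟩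
        · rintro ⟨hf, himg⟩
          have hyf : y ∉ Finset.univ.image f := himg ▸ Finset.notMem_erase y U
          exact ⟨⟨by simpa using hyf, hf⟩, by rw [himg, Finset.insert_erase hy]⟩
      simp only [hiff, mul_ite, mul_zero, Fin.consEquiv_apply, Fin.prod_univ_succ, Fin.cons_zero,
        Fin.cons_succ, Fin.tail]
    · intro y _ hy
      refine Finset.sum_eq_zero fun f _ => if_neg ?_
      rintro ⟨-, rfl⟩
      exact hy (Finset.mem_image.2 ⟨0, Finset.mem_univ _, rfl⟩)

end Wick

theorem eval_wickPolynomial_univ {Ω I : Type*} (X : I → Ω → ℝ) (S : I → I → ℝ) {m : ℕ}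
    (a : Fin m → I) (ω : Ω) :
    MvPolynomial.eval (fun i => X i ω) (wickPolynomial S a Finset.univ) = wickProduct X S a ω := by
  simp [wickPolynomial, wickProduct, involutionsOn, matchingWeight]

theorem memLp_eval_of_memLp {Ω I : Type*} [MeasurableSpace Ω] {μ : Measure Ω}
    [IsFiniteMeasure μ] {X : I → Ω → ℝ} (hX : ∀ i (p : NNReal), MemLp (X i) p μ)
    (P : MvPolynomial I ℝ) (p : NNReal) :
    MemLp (fun ω => MvPolynomial.eval (fun i => X i ω) P) p μ := by
  induction P using MvPolynomial.induction_on generalizing p with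
  | C c => simpa using memLp_const c
  | add P Q hP hQ => simpa only [map_add] using! (hP p).add (hQ p)
  | mul_X P i hP =>
    have : ENNReal.HolderTriple (2 * p : NNReal) (2 * p : NNReal) p := by
      constructor
      push_cast
      rw [ENNReal.mul_inv (by simp) (by simp), ← add_mul, ENNReal.inv_two_add_inv_two, one_mul]
    simpa using (hX i (2 * p)).mul' (hP (2 * p)) (r := p)

/-- The expectation of a polynomial in random variables with finite moments. -/
noncomputable def polynomialExpectation {Ω I : Type*} [MeasurableSpace Ω] {μ : Measure Ω}
    [IsFiniteMeasure μ] {X : I → Ω → ℝ} (hX : ∀ i (p : NNReal), MemLp (X i) p μ) :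
    MvPolynomial I ℝ →ₗ[ℝ] ℝ where
  toFun P := ∫ ω, MvPolynomial.eval (fun i => X i ω) P ∂μ
  map_add' P Q := by
    have hint (P : MvPolynomial I ℝ) := (memLp_eval_of_memLp hX P 1).integrable le_rfl
    simpa using integral_add (hint P) (hint Q)
  map_smul' c P := by simp [integral_const_mul]

theorem polynomialExpectation_apply {Ω I : Type*} [MeasurableSpace Ω] {μ : Measure Ω}
    [IsFiniteMeasure μ] {X : I → Ω → ℝ} (hX : ∀ i (p : NNReal), MemLp (X i) p μ)
    (P : MvPolynomial I ℝ) :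
    polynomialExpectation hX P = ∫ ω, MvPolynomial.eval (fun i => X i ω) P ∂μ :=
  rfl

theorem integral_linear_combination_pow {Ω I : Type*} [MeasurableSpace Ω] {μ : Measure Ω}
    {X : I → Ω → ℝ} (hmeas : ∀ i, Measurable (X i))
    (hgauss : ∀ (m : ℕ) (idx : Fin m → I) (c : Fin m → ℝ), ∃ v : NNReal,
      Measure.map (fun ω => ∑ x, c x * X (idx x) ω) μ = gaussianReal 0 v)
    {L : MvPolynomial I ℝ}
    (hL : L ∈ Submodule.span ℝ (Set.range (MvPolynomial.X (R := ℝ) (σ := I)))) :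
    ∃ v : NNReal, ∀ n : ℕ, ∫ ω, MvPolynomial.eval (fun i => X i ω) (L ^ n) ∂μ =
      ∫ x, x ^ n ∂gaussianReal 0 v := by
  obtain ⟨m, c, g, rfl⟩ := Submodule.mem_span_set'.1 hL
  choose idx hidx using fun x => (g x).2
  obtain ⟨v, hv⟩ := hgauss m idx c
  refine ⟨v, fun n => ?_⟩
  have hm : Measurable fun ω => ∑ x, c x * X (idx x) ω :=
    Finset.measurable_sum _ fun x _ => (hmeas _).const_mul _
  rw [← hv, integral_map hm.aemeasurable (by fun_prop)]
  simp [← hidx]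

/-- **Orthogonality of Wick products.**  Let `X = (X_i)_{i ∈ I}` be a mean-zero
jointly Gaussian family with covariance `S`.  Then Wick products of different
total degrees are orthogonal, and in general
`E[He_α(X;S) He_β(X;S)] = Σ_{M ∈ M_perf(α,β)} ∏_{uv ∈ M} S[u,v]`, where the sum
is over perfect matchings pairing elements of `α` (listed by `a : Fin p → I`)
only with elements of `β` (listed by `b : Fin s → I`), i.e. over bijections
`g : Fin p ≃ Fin s`. -/
theorem wickProduct_orthogonality {Ω I : Type*} [MeasurableSpace Ω]
    (μ : Measure Ω) [IsProbabilityMeasure μ]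
    (X : I → Ω → ℝ) (S : I → I → ℝ)
    (hmeas : ∀ i, Measurable (X i))
    (hS : ∀ i j, S i j = S j i)
    (hgauss : ∀ (m : ℕ) (idx : Fin m → I) (c : Fin m → ℝ), ∃ v : NNReal,
      Measure.map (fun ω => ∑ x, c x * X (idx x) ω) μ = gaussianReal 0 v)
    (hcov : ∀ i j, ∫ ω, X i ω * X j ω ∂μ = S i j)
    {p s : ℕ} (a : Fin p → I) (b : Fin s → I) :
    (p ≠ s → ∫ ω, wickProduct X S a ω * wickProduct X S b ω ∂μ = 0) ∧
    (∫ ω, wickProduct X S a ω * wickProduct X S b ω ∂μ =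
      ∑ g : Fin p ≃ Fin s, ∏ x, S (a x) (b (g x))) := by
  have hX (i : I) (q : NNReal) : MemLp (X i) q μ := by
    obtain ⟨v, hv⟩ := hgauss 1 (fun _ => i) (fun _ => 1)
    simp only [Finset.univ_unique, one_mul, Finset.sum_const, Finset.card_singleton,
      one_smul] at hv
    have h := memLp_id_gaussianReal (μ := 0) (v := v) q
    rw [← hv] at h
    exact (memLp_map_measure_iff (by fun_prop) (hmeas i).aemeasurable).1 h
  set E := polynomialExpectation hX with hEdef
  have hE1 : E 1 = 1 := by simp [hEdef, polynomialExpectation_apply]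
  have hEXX (i j : I) : E (MvPolynomial.X i * MvPolynomial.X j) = S i j := by
    simp [hEdef, polynomialExpectation_apply, hcov]
  have hE (i : I) (P : MvPolynomial I ℝ) : E (MvPolynomial.X i * P) =
      E (MvPolynomial.mkDerivation ℝ (fun j => MvPolynomial.C (S i j)) P) := by
    have h := linearMap_X_mul_eq_derivation E ?_ ?_ i P
    · simpa only [hEXX] using h
    · intro L hL
      obtain ⟨v, hv⟩ := integral_linear_combination_pow hmeas hgauss hL
      simpa [hEdef, polynomialExpectation_apply] using hv 1
    · intro L hL n
      obtain ⟨v, hv⟩ := integral_linear_combination_pow hmeas hgauss hL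
      simp only [hEdef, polynomialExpectation_apply, hv, integral_pow_add_two_gaussianReal]
      simp
  have hmain : ∫ ω, wickProduct X S a ω * wickProduct X S b ω ∂μ =
      ∑ g : Fin p ≃ Fin s, ∏ x, S (a x) (b (g x)) := by
    have h := linearMap_wickPolynomial_image_mul S hS E hE1 hE a b id Function.injective_id
      Finset.univ
    simp only [Finset.image_id, hEdef, polynomialExpectation_apply, map_mul,
      eval_wickPolynomial_univ, id] at h
    rw [h, ← Finset.sum_filter]
    have himage (f : Fin p → Fin s) : Finset.univ.image f = Finset.univ ↔ f.Surjective := by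
      simp [Finset.eq_univ_iff_forall, Function.Surjective]
    refine (Finset.sum_bij (fun (g : Fin p ≃ Fin s) _ => (g : Fin p → Fin s)) ?_ ?_ ?_ ?_).symm
    · intro g _
      simp [himage, g.injective, g.surjective]
    · intro g _ g' _ h
      exact DFunLike.coe_injective h
    · intro f hf
      simp only [Finset.mem_filter, himage, Finset.mem_univ, true_and] at hf
      exact ⟨Equiv.ofBijective f hf, Finset.mem_univ _, rfl⟩
    · intro g _
      rfl
  refine ⟨fun hps => ?_, hmain⟩
  have : IsEmpty (Fin p ≃ Fin s) := ⟨fun g => hps (by simpa using Fintype.card_congr g)⟩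
  rw [hmain, Fintype.sum_empty]
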